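/- arXiv:2011.11152 — 6 statements merged into one kernel-verified Lean document; each statement's English description precedes it below -/
import Mathlib

section
/- Let β1, β3, η, λ ∈ ℝ, let V be a real vector space, let (g_t)_{t≥1} be a sequence in V, and let θ_0 ∈ V. Define the Heavy Ball Method with L2 regularization by m_0 = 0, m_t = β1·m_{t-1} + β3·(g_t + λ·θ_{t-1}), θ_t = θ_{t-1} - η·m_t for t ≥ 1, and define the momentum without regularization by m'_0 = 0, m'_t = β1·m'_{t-1} + β3·g_t. Then for every t ≥ 1: θ_t = θ_{t-1} - η·m'_t - η·λ·β3·Σ_{k=1}^{t} β1^{k-1}·θ_{t-k}. -/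
open Finset in
/-- **HBM with L2 regularization decays an exponentially weighted sum of past iterates**
(key expansion in the proof of Proposition 2). With momentum buffer
`m_t = β1·m_{t-1} + β3·(g_t + λ·θ_{t-1})`, `θ_t = θ_{t-1} - η·m_t`, and the unregularized
momentum `m'_t = β1·m'_{t-1} + β3·g_t`, one has for every `t ≥ 1`
`θ_t = θ_{t-1} - η·m'_t - η·λ·β3·Σ_{k=1}^{t} β1^{k-1}·θ_{t-k}`. -/
theorem hbm_L2_decays_past_iterates
    (V : Type*) [AddCommGroup V] [Module ℝ V]
    (beta1 beta3 eta lam : ℝ) (g : ℕ → V) (theta m m' : ℕ → V)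
    (hm0 : m 0 = 0)
    (hm : ∀ t : ℕ, m (t + 1) = beta1 • m t + beta3 • (g (t + 1) + lam • theta t))
    (htheta : ∀ t : ℕ, theta (t + 1) = theta t - eta • m (t + 1))
    (hm'0 : m' 0 = 0)
    (hm' : ∀ t : ℕ, m' (t + 1) = beta1 • m' t + beta3 • g (t + 1)) :
    ∀ t : ℕ, theta (t + 1) =
      theta t - eta • m' (t + 1)
        - (eta * lam * beta3) • ∑ k ∈ Finset.range (t + 1), beta1 ^ k • theta (t - k) := by
  have key : ∀ t : ℕ, m (t + 1) = m' (t + 1) +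
      (lam * beta3) • ∑ k ∈ Finset.range (t + 1), beta1 ^ k • theta (t - k) := by
    intro t
    induction t with
    | zero =>
      rw [hm, hm', hm0, hm'0]
      simp
      module
    | succ n ih =>
      have hs : ∑ k ∈ Finset.range (n + 1 + 1), beta1 ^ k • theta (n + 1 - k)
          = beta1 • (∑ k ∈ Finset.range (n + 1), beta1 ^ k • theta (n - k)) + theta (n + 1) := by
        rw [Finset.sum_range_succ', Finset.smul_sum]
        simp [pow_succ', mul_smul]
      rw [hm (n + 1), hm' (n + 1), ih, hs]
      module
  intro t
  rw [htheta t, key t]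
  module
end

section
/- Let β1 ∈ (0,1), β3, η, λ ∈ ℝ, let V be a real vector space, (g_t)_{t≥1} a sequence in V, θ_0 ∈ V, and define m_0 = 0, m_t = β1·m_{t-1} + β3·(g_t + λ·θ_{t-1}), θ_t = θ_{t-1} - η·m_t, and m'_0 = 0, m'_t = β1·m'_{t-1} + β3·g_t. For t ≥ 1 define the exponential moving average ⟨θ⟩_{t-1} := ((1-β1)/(1-β1^t))·Σ_{k=1}^{t} β1^{k-1}·θ_{t-k}. Then for every t ≥ 1: θ_t = θ_{t-1} - η·m'_t - η·λ·β3·((1-β1^t)/(1-β1))·⟨θ⟩_{t-1}. -/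
open Finset in
/-- **Proposition 2 (expansion form): HBM with L2 regularization decays the exponential moving
average of past iterates.** With `β1 ∈ (0,1)`, momentum buffer
`m_t = β1·m_{t-1} + β3·(g_t + λ·θ_{t-1})`, `θ_t = θ_{t-1} - η·m_t`, unregularized momentum
`m'_t = β1·m'_{t-1} + β3·g_t`, and EMA
`⟨θ⟩_{t-1} = ((1-β1)/(1-β1^t))·Σ_{k=1}^{t} β1^{k-1}·θ_{t-k}`, one has for every `t ≥ 1`
`θ_t = θ_{t-1} - η·m'_t - η·λ·β3·((1-β1^t)/(1-β1))·⟨θ⟩_{t-1}`. -/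
theorem hbm_L2_decays_ema_of_past_iterates
    (V : Type*) [AddCommGroup V] [Module ℝ V]
    (beta1 beta3 eta lam : ℝ) (hbeta1 : beta1 ∈ Set.Ioo (0 : ℝ) 1)
    (g : ℕ → V) (theta m m' : ℕ → V)
    (hm0 : m 0 = 0)
    (hm : ∀ t : ℕ, m (t + 1) = beta1 • m t + beta3 • (g (t + 1) + lam • theta t))
    (htheta : ∀ t : ℕ, theta (t + 1) = theta t - eta • m (t + 1))
    (hm'0 : m' 0 = 0)
    (hm' : ∀ t : ℕ, m' (t + 1) = beta1 • m' t + beta3 • g (t + 1))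
    (ema : ℕ → V)
    (hema : ∀ t : ℕ, ema t =
      ((1 - beta1) / (1 - beta1 ^ (t + 1))) • ∑ k ∈ Finset.range (t + 1), beta1 ^ k • theta (t - k)) :
    ∀ t : ℕ, theta (t + 1) =
      theta t - eta • m' (t + 1)
        - (eta * lam * beta3 * ((1 - beta1 ^ (t + 1)) / (1 - beta1))) • ema t := by
  have key : ∀ t : ℕ, m (t + 1) = m' (t + 1) +
      (beta3 * lam) • ∑ k ∈ Finset.range (t + 1), beta1 ^ k • theta (t - k) := by
    intro t
    induction t with
    | zero =>
      rw [hm, hm', hm0, hm'0]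
      simp [smul_add, smul_smul]
    | succ n ih =>
      rw [hm (n + 1), hm' (n + 1), ih, Finset.sum_range_succ' _ (n + 1)]
      have h : ∑ k ∈ Finset.range (n + 1), beta1 ^ (k + 1) • theta (n + 1 - (k + 1))
          = beta1 • ∑ k ∈ Finset.range (n + 1), beta1 ^ k • theta (n - k) := by
        rw [Finset.smul_sum]
        refine Finset.sum_congr rfl fun k _ => ?_
        rw [smul_smul, pow_succ', Nat.add_sub_add_right]
      rw [h]
      simp only [pow_zero, Nat.sub_zero]
      module
  intro t
  obtain ⟨h0, h1⟩ := hbeta1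
  have hb : (1 - beta1) ≠ 0 := by linarith
  have hp : (1 - beta1 ^ (t + 1)) ≠ 0 := by
    have := pow_lt_one₀ h0.le h1 (Nat.succ_ne_zero t)
    exact (sub_pos.mpr this).ne'
  rw [htheta, key, hema, smul_smul]
  have hc : eta * lam * beta3 * ((1 - beta1 ^ (t + 1)) / (1 - beta1)) *
      ((1 - beta1) / (1 - beta1 ^ (t + 1))) = eta * lam * beta3 := by
    field_simp
  rw [hc]
  module
end

section
/- Let β1, β3, η, λ ∈ ℝ, let V be a real vector space, (g_t)_{t≥1} a sequence in V, θ_0 ∈ V, and define m_0 = 0, m_t = β1·m_{t-1} + β3·(g_t + λ·θ_{t-1}), θ_t = θ_{t-1} - η·m_t, and m'_0 = 0, m'_t = β1·m'_{t-1} + β3·g_t. Then for every t ≥ 1, the L2-regularized iterate θ_t differs from the stable-weight-decay step applied to the same history by θ_t - (θ_{t-1} - η·m'_t - η·λ·β3·(Σ_{k=1}^{t} β1^{k-1})·θ_{t-1}) = η·λ·β3·Σ_{k=2}^{t} β1^{k-1}·(θ_{t-1} - θ_{t-k}). In particular, the two steps coincide at step t if and only if η·λ·β3·Σ_{k=2}^{t}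 β1^{k-1}·(θ_{t-1} - θ_{t-k}) = 0. -/
open Finset in
/-- **Difference between HBM with L2 regularization and the stable-weight-decay step.**
With `m_t = β1·m_{t-1} + β3·(g_t + λ·θ_{t-1})`, `θ_t = θ_{t-1} - η·m_t` and
`m'_t = β1·m'_{t-1} + β3·g_t`, for every `t ≥ 1` the L2-regularized iterate differs from the
stable-weight-decay step applied to the same history by
`θ_t - (θ_{t-1} - η·m'_t - η·λ·β3·(Σ_{k=1}^{t} β1^{k-1})·θ_{t-1})
  = η·λ·β3·Σ_{k=2}^{t} β1^{k-1}·(θ_{t-1} - θ_{t-k})`,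
and the two steps coincide at step `t` iff this correction term vanishes. -/
theorem hbm_L2_vs_swd_difference
    (V : Type*) [AddCommGroup V] [Module ℝ V]
    (beta1 beta3 eta lam : ℝ) (g : ℕ → V) (theta m m' : ℕ → V)
    (hm0 : m 0 = 0)
    (hm : ∀ t : ℕ, m (t + 1) = beta1 • m t + beta3 • (g (t + 1) + lam • theta t))
    (htheta : ∀ t : ℕ, theta (t + 1) = theta t - eta • m (t + 1))
    (hm'0 : m' 0 = 0)
    (hm' : ∀ t : ℕ, m' (t + 1) = beta1 • m' t + beta3 • g (t + 1)) :
    ∀ t : ℕ,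
      (theta (t + 1)
          - (theta t - eta • m' (t + 1)
              - ((eta * lam * beta3) * ∑ k ∈ Finset.range (t + 1), beta1 ^ k) • theta t)
        = (eta * lam * beta3) • ∑ j ∈ Finset.Icc 1 t, beta1 ^ j • (theta t - theta (t - j))) ∧
      (theta (t + 1)
          = theta t - eta • m' (t + 1)
              - ((eta * lam * beta3) * ∑ k ∈ Finset.range (t + 1), beta1 ^ k) • theta t
        ↔ (eta * lam * beta3) • ∑ j ∈ Finset.Icc 1 t, beta1 ^ j • (theta t - theta (t - j)) = 0) := by
  have key : ∀ t : ℕ, m (t + 1) = m' (t + 1)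
      + (lam * beta3) • ∑ j ∈ Finset.range (t + 1), beta1 ^ j • theta (t - j) := by
    intro t
    induction t with
    | zero =>
      rw [hm, hm', hm0, hm'0]
      simp
      module
    | succ t ih =>
      rw [hm (t + 1), hm' (t + 1), ih, Finset.sum_range_succ' _ (t + 1)]
      have h : ∑ k ∈ Finset.range (t + 1), beta1 ^ (k + 1) • theta (t + 1 - (k + 1))
          = beta1 • ∑ j ∈ Finset.range (t + 1), beta1 ^ j • theta (t - j) := by
        rw [Finset.smul_sum]
        refine Finset.sum_congr rfl fun k _ => ?_
        rw [smul_smul, pow_succ', Nat.add_sub_add_right]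
      rw [h, pow_zero, Nat.sub_zero]
      module
  have hsum : ∀ t : ℕ, ∑ j ∈ Finset.Icc 1 t, beta1 ^ j • (theta t - theta (t - j))
      = (∑ k ∈ Finset.range (t + 1), beta1 ^ k) • theta t
        - ∑ j ∈ Finset.range (t + 1), beta1 ^ j • theta (t - j) := by
    intro t
    rw [Finset.sum_smul, ← Finset.sum_sub_distrib]
    simp_rw [← smul_sub]
    refine Finset.sum_subset (fun j hj => ?_) (fun j hj hj' => ?_)
    · simp only [Finset.mem_Icc, Finset.mem_range] at *
      omega
    · have : j = 0 := by
        simp only [Finset.mem_Icc, Finset.mem_range] at *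
        omega
      subst this
      simp
  intro t
  have main : theta (t + 1)
          - (theta t - eta • m' (t + 1)
              - ((eta * lam * beta3) * ∑ k ∈ Finset.range (t + 1), beta1 ^ k) • theta t)
        = (eta * lam * beta3) •
          ∑ j ∈ Finset.Icc 1 t, beta1 ^ j • (theta t - theta (t - j)) := by
    rw [hsum, htheta, key]
    module
  exact ⟨main, by rw [← main, sub_eq_zero]⟩
end

section
/- Let β1 ∈ (0,1), β3, η, λ ∈ ℝ with η·λ·β3·β1 ≠ 0, let V be a real vector space, and let g_1, g_2, θ_0 ∈ V. Define the HBM-with-L2 trajectory: m_1 = β3·(g_1 + λ·θ_0), θ_1 = θ_0 - η·m_1, m_2 = β1·m_1 + β3·(g_2 + λ·θ_1), θ_2 = θ_1 - η·m_2. Define the HBM-with-stable-weight-decay trajectory: m'_1 = β3·g_1, θ'_1 = θ_0 - η·m'_1 - η·λ·β3·θ_0, m'_2 = β1·m'_1 + β3·g_2, θ'_2 = θ'_1 - η·m'_2 - η·λ·β3·(1+β1)·θ'_1. Then θ'_1 = θ_1, and θ_2 - θ'_2 = η·λ·β3·β1·(θ_1 - θ_0); hence if θ_1 ≠ θ_0,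 then θ_2 ≠ θ'_2. In particular, L2 regularization is not identical to weight decay in the presence of Momentum (β1 > 0). -/
/-- **L2 regularization is not identical to weight decay in the presence of Momentum**
(Proposition 2, two-step witness). With `β1 ∈ (0,1)` and `η·λ·β3·β1 ≠ 0`, run two steps of
HBM with L2 regularization and two steps of HBM with stable weight decay from the same `θ_0`.
Then the first iterates agree, the second iterates differ by
`θ_2 - θ'_2 = η·λ·β3·β1·(θ_1 - θ_0)`, and hence `θ_1 ≠ θ_0` implies `θ_2 ≠ θ'_2`. -/
theorem L2_not_identical_to_weight_decay_with_momentum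
    (V : Type*) [AddCommGroup V] [Module ℝ V]
    (beta1 beta3 eta lam : ℝ) (hbeta1 : beta1 ∈ Set.Ioo (0 : ℝ) 1)
    (hne : eta * lam * beta3 * beta1 ≠ 0)
    (g1 g2 theta0 : V)
    (m1 theta1 m2 theta2 m'1 theta'1 m'2 theta'2 : V)
    (hm1 : m1 = beta3 • (g1 + lam • theta0))
    (htheta1 : theta1 = theta0 - eta • m1)
    (hm2 : m2 = beta1 • m1 + beta3 • (g2 + lam • theta1))
    (htheta2 : theta2 = theta1 - eta • m2)
    (hm'1 : m'1 = beta3 • g1)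
    (htheta'1 : theta'1 = theta0 - eta • m'1 - (eta * lam * beta3) • theta0)
    (hm'2 : m'2 = beta1 • m'1 + beta3 • g2)
    (htheta'2 : theta'2 = theta'1 - eta • m'2 - (eta * lam * beta3 * (1 + beta1)) • theta'1) :
    theta'1 = theta1 ∧
    theta2 - theta'2 = (eta * lam * beta3 * beta1) • (theta1 - theta0) ∧
    (theta1 ≠ theta0 → theta2 ≠ theta'2) := by
  have h1 : theta'1 = theta1 := by
    rw [htheta'1, htheta1, hm'1, hm1]
    module
  have h2 : theta2 - theta'2 = (eta * lam * beta3 * beta1) • (theta1 - theta0) := by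
    rw [htheta2, htheta'2, h1, hm2, hm'2, hm1, hm'1]
    module
  refine ⟨h1, h2, fun h heq => ?_⟩
  rw [heq, sub_self] at h2
  rcases smul_eq_zero.mp h2.symm with h3 | h3
  · exact hne h3
  · exact h (sub_eq_zero.mp h3)
end

section
/- Let β1 ∈ (0,1), β3, η, λ ∈ ℝ with η ≠ 0, let θ_t, m_t, m'_t be real-valued (or coordinatewise) sequences generated by HBM with L2 regularization: m_0 = 0, m_t = β1·m_{t-1} + β3·(g_t + λ·θ_{t-1}), θ_t = θ_{t-1} - η·m_t, and m'_0 = 0, m'_t = β1·m'_{t-1} + β3·g_t. Fix t ≥ 1 and suppose θ_{t-1} ≠ 0. Then the step-t update can be written in the form θ_t = (1 - η·μ_t)·θ_{t-1} - η·m'_t with μ_t = λ·β3·((1-β1^t)/(1-β1))·⟨θ⟩_{t-1}/θ_{t-1}, where ⟨θ⟩_{t-1} := ((1-β1)/(1-β1^t))·Σ_{k=1}^{t} β1^{k-1}·θ_{t-k}; hence the weight decay rate of HBM with L2 regularization at step t is R_t = 1 - λ·β3·((1-β1^t)/(1-β1))·⟨θ⟩_{t-1}/θ_{t-1}, which depends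 on the trajectory and is therefore not constant in general. -/
open Finset in
/-- **The weight decay rate of HBM with L2 regularization depends on the trajectory**
(Proposition 2, rate form). For real-valued (coordinatewise) dynamics with `β1 ∈ (0,1)`,
`η ≠ 0`, `m_t = β1·m_{t-1} + β3·(g_t + λ·θ_{t-1})`, `θ_t = θ_{t-1} - η·m_t`,
`m'_t = β1·m'_{t-1} + β3·g_t`, and `θ_{t-1} ≠ 0`, the step-`t` update can be written as
`θ_t = (1 - η·μ_t)·θ_{t-1} - η·m'_t` precisely for
`μ_t = λ·β3·((1-β1^t)/(1-β1))·⟨θ⟩_{t-1}/θ_{t-1}`, where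
`⟨θ⟩_{t-1} = ((1-β1)/(1-β1^t))·Σ_{k=1}^{t} β1^{k-1}·θ_{t-k}`. Hence the weight decay rate is
`R_t = 1 - λ·β3·((1-β1^t)/(1-β1))·⟨θ⟩_{t-1}/θ_{t-1}`, which is trajectory dependent. -/
theorem hbm_L2_weight_decay_rate
    (beta1 beta3 eta lam : ℝ) (hbeta1 : beta1 ∈ Set.Ioo (0 : ℝ) 1) (heta : eta ≠ 0)
    (g theta m m' : ℕ → ℝ)
    (hm0 : m 0 = 0)
    (hm : ∀ t : ℕ, m (t + 1) = beta1 * m t + beta3 * (g (t + 1) + lam * theta t))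
    (htheta : ∀ t : ℕ, theta (t + 1) = theta t - eta * m (t + 1))
    (hm'0 : m' 0 = 0)
    (hm' : ∀ t : ℕ, m' (t + 1) = beta1 * m' t + beta3 * g (t + 1))
    (t : ℕ) (hθ : theta t ≠ 0)
    (ema : ℝ)
    (hema : ema = ((1 - beta1) / (1 - beta1 ^ (t + 1)))
      * ∑ k ∈ Finset.range (t + 1), beta1 ^ k * theta (t - k)) :
    ∀ μ : ℝ,
      theta (t + 1) = (1 - eta * μ) * theta t - eta * m' (t + 1)
        ↔ μ = lam * beta3 * ((1 - beta1 ^ (t + 1)) / (1 - beta1)) * ema / theta t := by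

  have key : ∀ n : ℕ, m (n + 1) = m' (n + 1)
      + lam * beta3 * ∑ k ∈ Finset.range (n + 1), beta1 ^ k * theta (n - k) := by
    intro n
    induction n with
    | zero =>
      rw [hm, hm', hm0, hm'0]
      simp
      ring
    | succ n ih =>
      have hS : ∑ k ∈ Finset.range (n + 1 + 1), beta1 ^ k * theta (n + 1 - k)
          = beta1 * (∑ k ∈ Finset.range (n + 1), beta1 ^ k * theta (n - k))
            + theta (n + 1) := by
        rw [Finset.sum_range_succ', Finset.mul_sum]
        congr 1
        · refine Finset.sum_congr rfl fun k _ => ?_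
          rw [Nat.add_sub_add_right]
          ring
        · simp
      rw [hm (n + 1), hm' (n + 1), ih, hS]
      ring
  intro μ
  obtain ⟨h0, h1⟩ := hbeta1
  have hp : beta1 ^ (t + 1) < 1 := pow_lt_one₀ h0.le h1 (Nat.succ_ne_zero t)
  have ha : 1 - beta1 ≠ 0 := by linarith
  have hb : 1 - beta1 ^ (t + 1) ≠ 0 := by linarith
  have hE : lam * beta3 * ((1 - beta1 ^ (t + 1)) / (1 - beta1)) * ema
      = lam * beta3 * ∑ k ∈ Finset.range (t + 1), beta1 ^ k * theta (t - k) := by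
    rw [hema]
    generalize ∑ k ∈ Finset.range (t + 1), beta1 ^ k * theta (t - k) = S
    field_simp
  rw [hE, eq_div_iff hθ, htheta t, key t]
  constructor
  · intro h
    apply mul_left_cancel₀ heta
    linear_combination h
  · intro h
    linear_combination eta * h
end

section
/- Let n ∈ ℕ, let L : EuclideanSpace ℝ (Fin n) → ℝ be differentiable, let η, λ ∈ ℝ with c := 1 - η·λ ≠ 0, and let (θ_t)_{t≥0} satisfy θ_t = c·θ_{t-1} - η·∇L(θ_{t-1}) for all t ≥ 1 (SGD with weight decay, Equation 2). Define the rescaled coordinates w_t := c^{-t}·θ_t, and for each t the rescaled loss L^w_t(w) := L(c^t·w). Then for every t ≥ 1: w_t = w_{t-1} - c^{-2t+1}·η·∇L^w_{t-1}(w_{t-1}), where ∇ denotes the gradient (so ∇L^w_{t-1}(w) = c^{t-1}·∇L(c^{t-1}·w)). That is, learning dynamics with weight decay in the coordinates θ is equivalent to learning dynamics without weight decay in the rescaled coordinates w, with the loss landscape flattened by a factor c per iteration and the learning rate scaled by c^{-2} per iteration. -/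
/-- **A dynamical perspective on weight decay** (Equation 3 of the paper). If
`θ_t = (1 - η·λ)·θ_{t-1} - η·∇L(θ_{t-1})` with `c := 1 - η·λ ≠ 0` and `L` differentiable, then
in the rescaled coordinates `w_t := c^{-t}·θ_t`, with rescaled losses `L^w_t(w) := L(c^t·w)`,
the dynamics reads `w_t = w_{t-1} - c^{-2t+1}·η·∇L^w_{t-1}(w_{t-1})`: weight decay is equivalent
to flattening the loss landscape by `c` and scaling the learning rate by `c^{-2}` per iteration. -/
theorem weight_decay_rescaled_dynamics
    (n : ℕ) (L : EuclideanSpace ℝ (Fin n) → ℝ) (hL : Differentiable ℝ L)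
    (eta lam : ℝ) (c : ℝ) (hc : c = 1 - eta * lam) (hc0 : c ≠ 0)
    (theta : ℕ → EuclideanSpace ℝ (Fin n))
    (htheta : ∀ t : ℕ, theta (t + 1) = c • theta t - eta • gradient L (theta t))
    (w : ℕ → EuclideanSpace ℝ (Fin n))
    (hw : ∀ t : ℕ, w t = (c ^ (-(t : ℤ))) • theta t)
    (Lw : ℕ → EuclideanSpace ℝ (Fin n) → ℝ)
    (hLw : ∀ (t : ℕ) (x : EuclideanSpace ℝ (Fin n)), Lw t x = L ((c ^ t) • x)) :
    ∀ t : ℕ, w (t + 1) =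
      w t - (c ^ (-2 * ((t : ℤ) + 1) + 1) * eta) • gradient (Lw t) (w t) := by
  intro t
  have hfun : Lw t = fun x => L ((c ^ t) • x) := funext (hLw t)
  have hpt : (c ^ t) • w t = theta t := by
    rw [hw, smul_smul, zpow_neg, zpow_natCast, mul_inv_cancel₀ (pow_ne_zero t hc0), one_smul]
  have hg : gradient (Lw t) (w t) = (c ^ t) • gradient L (theta t) := by
    rw [hfun]
    unfold gradient
    rw [fderiv_comp_smul, hpt, map_smulₛₗ]
    simp
  have e1 : c ^ (-((t + 1 : ℕ) : ℤ)) * c = c ^ (-(t : ℤ)) := by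
    rw [← zpow_add_one₀ hc0]
    congr 1
    push_cast
    ring
  have e2 : c ^ (-2 * ((t : ℤ) + 1) + 1) * c ^ t = c ^ (-((t + 1 : ℕ) : ℤ)) := by
    rw [← zpow_natCast c t, ← zpow_add₀ hc0]
    congr 1
    push_cast
    ring
  rw [hg, hw (t + 1), hw t, htheta t, smul_sub, smul_smul, smul_smul, smul_smul, e1,
    mul_right_comm, e2]
end
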